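/- Let A be a finite abelian group, M a countable monoid, F a linear cellular automaton on A^M that is diffusive in density, and μ a harmonically mixing probability measure. Then there exists a subset J ⊆ ℕ of Cesàro density 1 such that F^j μ converges weak* to Haar measure along j ∈ J; consequently the Cesàro averages (1/N)∑_{n=1}^N F^n μ converge weak* to Haar measure. -/

import Mathlib

open MeasureTheory Filter

/-- Evaluation at `a` of the character of `A^M` with coefficient system `χ`. -/
noncomputable def charEval {A M : Type*} [AddCommGroup A] (χ : M → AddChar A ℂ)
    (a : M → A) : ℂ :=
  ∏ᶠ m, χ m (a m)

/-- Harmonic mixing of a measure on `A^M`. -/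
def HarmonicallyMixing {A M : Type*} [AddCommGroup A] [MeasurableSpace A]
    (μ : Measure (M → A)) : Prop :=
  ∀ ε > 0, ∃ R : ℕ, ∀ χ : M → AddChar A ℂ, {m | χ m ≠ 1}.Finite →
    R < {m | χ m ≠ 1}.ncard → ‖∫ a, charEval χ a ∂μ‖ < ε

/-- A set `J ⊆ ℕ` has Cesàro density one. -/
def HasDensityOne (J : Set ℕ) : Prop :=
  Tendsto (fun N => ((J ∩ Set.Iio N).ncard : ℝ) / N) atTop (nhds 1)

/-!
The integral of a nontrivial character `χ` against `F^n μ` is the integral of `χ ∘ F^n` against `μ`.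
Diffusion sends the rank of `χ ∘ F^n` to infinity along a set of density one, so harmonic mixing
makes these integrals tend to `0`, the Haar integral of `χ`. As `A^M` has only countably many
continuous characters, a diagonal argument yields one set of density one serving all of them, and by
Stone–Weierstrass the span of the characters is dense in `C(A^M, ℂ)`.
-/

open scoped Topology

section Density

theorem hasDensityOne_iff_tendsto_compl {J : Set ℕ} :
    HasDensityOne J ↔
      Tendsto (fun N : ℕ => ((Jᶜ ∩ Set.Iio N).ncard : ℝ) / N) atTop (𝓝 0) := by
  have hcompl : ∀ᶠ N : ℕ in atTop,
      ((Jᶜ ∩ Set.Iio N).ncard : ℝ) / N = 1 - ((J ∩ Set.Iio N).ncard : ℝ) / N := by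
    filter_upwards [eventually_ne_atTop 0] with N hN
    have hcard : (J ∩ Set.Iio N).ncard + (Jᶜ ∩ Set.Iio N).ncard = N := by
      simpa [Set.inter_comm, Set.sdiff_eq] using
        Set.ncard_inter_add_ncard_sdiff_eq_ncard (Set.Iio N) J (Set.finite_Iio N)
    rw [eq_sub_iff_add_eq', ← add_div, div_eq_one_iff_eq (Nat.cast_ne_zero.2 hN)]
    exact_mod_cast hcard
  rw [HasDensityOne, tendsto_congr' hcompl]
  exact ⟨fun h => by simpa using h.const_sub 1, fun h => by simpa using h.const_sub 1⟩

theorem hasDensityOne_univ : HasDensityOne Set.univ := by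
  simp [hasDensityOne_iff_tendsto_compl]

theorem HasDensityOne.inter {J K : Set ℕ} (hJ : HasDensityOne J) (hK : HasDensityOne K) :
    HasDensityOne (J ∩ K) := by
  rw [hasDensityOne_iff_tendsto_compl] at *
  refine squeeze_zero (fun N => by positivity) (fun N => ?_) (by simpa using hJ.add hK)
  rw [← add_div, Set.compl_inter, Set.union_inter_distrib_right]
  gcongr
  exact_mod_cast Set.ncard_union_le _ _

theorem HasDensityOne.biInter_le {J : ℕ → Set ℕ} (hJ : ∀ i, HasDensityOne (J i)) (k : ℕ) :
    HasDensityOne (⋂ i ≤ k, J i) := by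
  induction k with
  | zero => simpa using hJ 0
  | succ k ih =>
    rw [Set.biInter_le_succ]
    exact ih.inter (hJ (k + 1))

/-- The diagonal set attached to a sequence of sets `J` and of thresholds `t`: from time `t k` on,
its elements are required to lie in `J k`. -/
def diagonalSet (J : ℕ → Set ℕ) (t : ℕ → ℕ) : Set ℕ :=
  {n | ∀ k, t k ≤ n → n ∈ J k}

theorem exists_compl_diagonalSet_inter_Iio_subset {J : ℕ → Set ℕ} (hJ : Antitone J) {t : ℕ → ℕ}
    (ht : StrictMono t) {k₀ N : ℕ} (hN : t k₀ ≤ N) :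
    ∃ k ≥ k₀, t k ≤ N ∧ (diagonalSet J t)ᶜ ∩ Set.Iio N ⊆ (J k)ᶜ ∩ Set.Iio N := by
  have le_greatest {i : ℕ} (hi : t i ≤ N) : i ≤ Nat.findGreatest (t · ≤ N) N :=
    Nat.le_findGreatest (ht.le_apply.trans hi) hi
  refine ⟨Nat.findGreatest (t · ≤ N) N, le_greatest hN,
    Nat.findGreatest_spec (P := (t · ≤ N)) (ht.le_apply.trans hN) hN, ?_⟩
  rintro n ⟨hn, hnN : n < N⟩
  obtain ⟨i, hin, hni⟩ : ∃ i, t i ≤ n ∧ n ∉ J i := by simpa [diagonalSet] using hn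
  exact ⟨fun h => hni (hJ (le_greatest (hin.trans hnN.le)) h), hnN⟩

theorem hasDensityOne_diagonalSet {J : ℕ → Set ℕ} (hJ : Antitone J) {t : ℕ → ℕ}
    (ht : StrictMono t)
    (hsparse : ∀ k, ∀ N ≥ t k, (((J k)ᶜ ∩ Set.Iio N).ncard : ℝ) / N ≤ 1 / ((k : ℝ) + 1)) :
    HasDensityOne (diagonalSet J t) := by
  rw [hasDensityOne_iff_tendsto_compl, Metric.tendsto_atTop]
  intro ε hε
  obtain ⟨k₀, hk₀⟩ := exists_nat_one_div_lt hε
  refine ⟨t k₀, fun N hN => ?_⟩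
  obtain ⟨k, hk₀k, hkN, hsub⟩ := exists_compl_diagonalSet_inter_Iio_subset hJ ht hN
  rw [Real.dist_eq, sub_zero, abs_of_nonneg (by positivity)]
  calc (((diagonalSet J t)ᶜ ∩ Set.Iio N).ncard : ℝ) / N
      ≤ (((J k)ᶜ ∩ Set.Iio N).ncard : ℝ) / N := by
        gcongr
        exact (Set.finite_Iio N).inter_of_right _
    _ ≤ 1 / ((k : ℝ) + 1) := hsparse k N hkN
    _ ≤ 1 / ((k₀ : ℝ) + 1) := by gcongr
    _ < ε := hk₀

theorem exists_hasDensityOne_forall_eventually_mem_of_antitone {J : ℕ → Set ℕ} (hanti : Antitone J)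
    (hJ : ∀ k, HasDensityOne (J k)) :
    ∃ K : Set ℕ, HasDensityOne K ∧ ∀ k, ∀ᶠ n in atTop, n ∈ K → n ∈ J k := by
  obtain ⟨t, ht, hsparse⟩ := extraction_forall_of_eventually fun k =>
    eventually_forall_ge_atTop.2 <|
      (hasDensityOne_iff_tendsto_compl.1 (hJ k)).eventually_le_const
        (Nat.one_div_pos_of_nat (n := k))
  refine ⟨diagonalSet J t, hasDensityOne_diagonalSet hanti ht hsparse, fun k => ?_⟩
  filter_upwards [eventually_ge_atTop (t k)] with n hn hnK using hnK k hn

theorem exists_hasDensityOne_forall_eventually_mem {ι : Type*} [Countable ι] {J : ι → Set ℕ}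
    (hJ : ∀ i, HasDensityOne (J i)) :
    ∃ K : Set ℕ, HasDensityOne K ∧ ∀ i, ∀ᶠ n in atTop, n ∈ K → n ∈ J i := by
  cases isEmpty_or_nonempty ι
  · exact ⟨Set.univ, hasDensityOne_univ, isEmptyElim⟩
  obtain ⟨e, he⟩ := exists_surjective_nat ι
  have hanti : Antitone fun k => ⋂ i ≤ k, J (e i) := fun _ _ hkl =>
    Set.biInter_subset_biInter_left fun _ hi => le_trans hi hkl
  obtain ⟨K, hK, hKJ⟩ := exists_hasDensityOne_forall_eventually_mem_of_antitone hanti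
    (HasDensityOne.biInter_le fun i => hJ (e i))
  refine ⟨K, hK, he.forall.2 fun k => ?_⟩
  filter_upwards [hKJ k] with n hn hnK using Set.mem_iInter₂.1 (hn hnK) k le_rfl

theorem exists_hasDensityOne_forall_tendsto {ι X : Type*} [Countable ι] {u : ι → ℕ → X}
    {l : ι → Filter X}
    (h : ∀ i, ∃ J : Set ℕ, HasDensityOne J ∧ Tendsto (u i) (atTop ⊓ 𝓟 J) (l i)) :
    ∃ J : Set ℕ, HasDensityOne J ∧ ∀ i, Tendsto (u i) (atTop ⊓ 𝓟 J) (l i) := by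
  choose J hJ hu using h
  obtain ⟨K, hK, hKJ⟩ := exists_hasDensityOne_forall_eventually_mem hJ
  exact ⟨K, hK, fun i => (hu i).mono_left <|
    le_inf inf_le_left <| le_principal_iff.2 <| eventually_inf_principal.2 (hKJ i)⟩

variable {E : Type*} [NormedAddCommGroup E] [NormedSpace ℝ E] {J : Set ℕ} {u : ℕ → E} {l : E}
  {C : ℝ}

theorem HasDensityOne.tendsto_cesaro_smul_indicator_compl (hJ : HasDensityOne J)
    (hC : ∀ n, ‖u n‖ ≤ C) :
    Tendsto (fun N : ℕ => (N : ℝ)⁻¹ • ∑ n ∈ Finset.range N, Jᶜ.indicator u n) atTop (𝓝 0) := by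
  classical
  refine squeeze_zero_norm (fun N => ?_)
    (by simpa using (hasDensityOne_iff_tendsto_compl.1 hJ).const_mul C)
  have hcard : ((Finset.range N).filter (· ∈ Jᶜ)).card = (Jᶜ ∩ Set.Iio N).ncard := by
    rw [← Set.ncard_coe_finset]
    congr 1
    ext n
    simp [and_comm]
  calc ‖(N : ℝ)⁻¹ • ∑ n ∈ Finset.range N, Jᶜ.indicator u n‖
      ≤ (N : ℝ)⁻¹ * ∑ n ∈ Finset.range N, Jᶜ.indicator (fun _ => C) n := by
        rw [norm_smul, norm_inv, Real.norm_natCast]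
        gcongr
        refine norm_sum_le_of_le _ fun n _ => ?_
        rw [norm_indicator_eq_indicator_norm]
        exact Set.indicator_le_indicator (hC n)
    _ = C * (((Jᶜ ∩ Set.Iio N).ncard : ℝ) / N) := by
        simp only [Set.indicator_apply]
        rw [← Finset.sum_filter, Finset.sum_const, hcard, nsmul_eq_mul]
        ring

theorem HasDensityOne.tendsto_cesaro_smul (hJ : HasDensityOne J) (hC : ∀ n, ‖u n‖ ≤ C)
    (hu : Tendsto u (atTop ⊓ 𝓟 J) (𝓝 l)) :
    Tendsto (fun N : ℕ => (N : ℝ)⁻¹ • ∑ n ∈ Finset.range N, u n) atTop (𝓝 l) := by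
  classical
  have hon : Tendsto (J.piecewise u fun _ => l) atTop (𝓝 l) := hu.piecewise tendsto_const_nhds
  have hoff : Tendsto
      (fun N : ℕ => (N : ℝ)⁻¹ • ∑ n ∈ Finset.range N, Jᶜ.indicator (fun n => u n - l) n)
      atTop (𝓝 0) :=
    hJ.tendsto_cesaro_smul_indicator_compl fun n =>
      (norm_sub_le (u n) l).trans (add_le_add_left (hC n) ‖l‖)
  have hsplit (n : ℕ) :
      J.piecewise u (fun _ => l) n + Jᶜ.indicator (fun n => u n - l) n = u n := by
    by_cases hn : n ∈ J <;> simp [hn]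
  simpa only [← smul_add, ← Finset.sum_add_distrib, hsplit, add_zero] using
    hon.cesaro_smul.add hoff

theorem tendsto_cesaro_smul_Icc_of_tendsto_cesaro_smul (hC : ∀ n, ‖u n‖ ≤ C)
    (hu : Tendsto (fun N : ℕ => (N : ℝ)⁻¹ • ∑ n ∈ Finset.range N, u n) atTop (𝓝 l)) :
    Tendsto (fun N : ℕ => (N : ℝ)⁻¹ • ∑ n ∈ Finset.Icc 1 N, u n) atTop (𝓝 l) := by
  have hboundary : Tendsto (fun N : ℕ => (N : ℝ)⁻¹ • (u N - u 0)) atTop (𝓝 0) :=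
    NormedField.tendsto_zero_smul_of_tendsto_zero_of_bounded tendsto_inv_atTop_nhds_zero_nat
      (isBoundedUnder_of ⟨C + C, fun N => (norm_sub_le _ _).trans (add_le_add (hC N) (hC 0))⟩)
  have hsum (N : ℕ) :
      ∑ n ∈ Finset.Icc 1 N, u n = ∑ n ∈ Finset.range N, u n + (u N - u 0) := by
    rw [← add_sub_assoc, ← Finset.sum_range_succ, Finset.sum_range_succ', add_sub_cancel_right,
      Finset.range_eq_Ico, Finset.sum_Ico_add' u 0 N 1]
    rfl
  simpa only [hsum, smul_add, add_zero] using hu.add hboundary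

theorem HasDensityOne.tendsto_cesaro_smul_Icc (hJ : HasDensityOne J) (hC : ∀ n, ‖u n‖ ≤ C)
    (hu : Tendsto u (atTop ⊓ 𝓟 J) (𝓝 l)) :
    Tendsto (fun N : ℕ => (N : ℝ)⁻¹ • ∑ n ∈ Finset.Icc 1 N, u n) atTop (𝓝 l) :=
  tendsto_cesaro_smul_Icc_of_tendsto_cesaro_smul hC (hJ.tendsto_cesaro_smul hC hu)

end Density

section ContinuousCharacters

/-- The continuous characters of `G` with values in `𝕜`, as a multiplicative submonoid of
`C(G, 𝕜)`. They are not required to be unitary; this is automatic on a compact group. -/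
def continuousCharacters (𝕜 G : Type*) [RCLike 𝕜] [AddMonoid G] [TopologicalSpace G] :
    Submonoid C(G, 𝕜) where
  carrier := {f | ∃ ψ : AddChar G 𝕜, ⇑ψ = f}
  one_mem' := ⟨1, rfl⟩
  mul_mem' := by
    rintro f g ⟨ψ, hψ⟩ ⟨φ, hφ⟩
    exact ⟨ψ * φ, by rw [AddChar.coe_mul, hψ, hφ, ContinuousMap.coe_mul]⟩

variable {𝕜 G : Type*} [RCLike 𝕜] [AddMonoid G] [TopologicalSpace G]

theorem star_mem_continuousCharacters {f : C(G, 𝕜)} (hf : f ∈ continuousCharacters 𝕜 G) :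
    star f ∈ continuousCharacters 𝕜 G := by
  obtain ⟨ψ, hψ⟩ := hf
  exact ⟨(starRingEnd 𝕜 : 𝕜 →* 𝕜).compAddChar ψ, by ext x; simp [hψ]⟩

theorem adjoin_continuousCharacters_toSubmodule :
    Subalgebra.toSubmodule
        (StarAlgebra.adjoin 𝕜 (continuousCharacters 𝕜 G : Set C(G, 𝕜))).toSubalgebra =
      Submodule.span 𝕜 (continuousCharacters 𝕜 G) := by
  have hstar : star (continuousCharacters 𝕜 G : Set C(G, 𝕜)) ⊆ continuousCharacters 𝕜 G :=
    fun f hf => by simpa using star_mem_continuousCharacters hf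
  rw [StarAlgebra.adjoin_toSubalgebra, Set.union_eq_left.2 hstar, Algebra.adjoin_eq_span,
    Submonoid.closure_eq]

theorem dense_span_continuousCharacters [CompactSpace G]
    (hsep : ∀ x y : G, x ≠ y → ∃ ψ : AddChar G 𝕜, Continuous ψ ∧ ψ x ≠ ψ y) :
    Dense (Submodule.span 𝕜 (continuousCharacters 𝕜 G : Set C(G, 𝕜)) : Set C(G, 𝕜)) := by
  have hadjoin : (StarAlgebra.adjoin 𝕜
      (continuousCharacters 𝕜 G : Set C(G, 𝕜))).toSubalgebra.SeparatesPoints := by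
    intro x y hxy
    obtain ⟨ψ, hψ, hψxy⟩ := hsep x y hxy
    exact ⟨ψ, ⟨⟨ψ, hψ⟩, StarAlgebra.subset_adjoin 𝕜 _ ⟨ψ, rfl⟩, rfl⟩, hψxy⟩
  have htop := ContinuousMap.starSubalgebra_topologicalClosure_eq_top_of_separatesPoints _ hadjoin
  rw [← adjoin_continuousCharacters_toSubmodule, dense_iff_closure_eq]
  exact congr_arg SetLike.coe htop

theorem isOpen_addChar_eq_one_of_nsmul_eq_zero {R : Type*} [CommRing R] [IsDomain R]
    [TopologicalSpace R] [T1Space R] {n : ℕ} (hn : 0 < n) (hG : ∀ x : G, n • x = 0)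
    {Ψ : AddChar G R} (hΨ : Continuous Ψ) : IsOpen {x | Ψ x = 1} := by
  classical
  have hroot (x : G) : Ψ x ∈ Polynomial.nthRootsFinset n (1 : R) := by
    rw [Polynomial.mem_nthRootsFinset hn, ← AddChar.map_nsmul_eq_pow, hG,
      AddChar.map_zero_eq_one]
  have hpreimage :
      {x | Ψ x = 1} = Ψ ⁻¹' ((Polynomial.nthRootsFinset n (1 : R)).erase 1 : Set R)ᶜ := by
    ext x
    simp [hroot x]
  rw [hpreimage]
  exact (Finset.finite_toSet _).isClosed.isOpen_compl.preimage hΨ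

end ContinuousCharacters

section CharEval

theorem countable_setOf_finite_ne_one {ι B : Type*} [Countable ι] [Countable B] [One B] :
    {f : ι → B | {i | f i ≠ 1}.Finite}.Countable := by
  have : Countable (Additive B) := Additive.toMul.injective.countable
  refine (Set.countable_range fun (f : ι →₀ Additive B) i => (f i).toMul).mono fun f hf => ?_
  exact ⟨Finsupp.ofSupportFinite (fun i => Additive.ofMul (f i)) hf, rfl⟩

variable {A M : Type*} [AddCommGroup A]

theorem charEval_eq_prod {χ : M → AddChar A ℂ} {s : Finset M} (hs : {m | χ m ≠ 1} ⊆ s)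
    (a : M → A) : charEval χ a = ∏ m ∈ s, χ m (a m) := by
  refine finprod_eq_prod_of_mulSupport_subset _ fun m hm => hs fun h => hm ?_
  simp [h]

/-- `charEval χ` as an additive character, for `χ` of finite rank: `charEval` is a `finprod`, which
takes the junk value `1` on infinite products. -/
noncomputable def charEvalAddChar (χ : M → AddChar A ℂ) (hχ : {m | χ m ≠ 1}.Finite) :
    AddChar (M → A) ℂ where
  toFun := charEval χ
  map_zero_eq_one' := by
    simp [charEval_eq_prod hχ.coe_toFinset.ge]
  map_add_eq_mul' x y := by
    simp [charEval_eq_prod hχ.coe_toFinset.ge, AddChar.map_add_eq_mul, Finset.prod_mul_distrib]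

theorem addChar_sum_eq_prod {B ι R : Type*} [AddCommMonoid B] [CommMonoid R] (Ψ : AddChar B R)
    (s : Finset ι) (f : ι → B) : Ψ (∑ i ∈ s, f i) = ∏ i ∈ s, Ψ (f i) :=
  map_prod Ψ.toMonoidHom (fun i => Multiplicative.ofAdd (f i)) s

theorem exists_charEval_eq_of_forall_eq_one {Ψ : AddChar (M → A) ℂ} {s : Finset M}
    (hΨ : ∀ a : M → A, (∀ m ∈ s, a m = 0) → Ψ a = 1) :
    ∃ χ : M → AddChar A ℂ, {m | χ m ≠ 1}.Finite ∧ charEval χ = Ψ := by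
  classical
  let χ : M → AddChar A ℂ := fun m => Ψ.compAddMonoidHom (AddMonoidHom.single (fun _ => A) m)
  have hs : {m | χ m ≠ 1} ⊆ s := by
    refine fun m hm => by_contra fun hms => hm (DFunLike.ext _ _ fun x => hΨ _ fun k hk => ?_)
    exact Pi.single_eq_of_ne (M := fun _ => A) (ne_of_mem_of_not_mem hk hms) x
  refine ⟨χ, s.finite_toSet.subset hs, funext fun a => ?_⟩
  have hrest : Ψ (a - ∑ m ∈ s, Pi.single m (a m)) = 1 :=
    hΨ _ fun m hm => by simp [Finset.sum_apply, Pi.single_apply, hm]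
  calc charEval χ a = Ψ (∑ m ∈ s, Pi.single m (a m)) := by
        rw [charEval_eq_prod hs, addChar_sum_eq_prod]
        rfl
    _ = Ψ a := by rw [← one_mul (Ψ _), ← hrest, ← AddChar.map_add_eq_mul, sub_add_cancel]

theorem exists_charEval_eq_of_continuous [Finite A] [TopologicalSpace A] {Ψ : AddChar (M → A) ℂ}
    (hΨ : Continuous Ψ) :
    ∃ χ : M → AddChar A ℂ, {m | χ m ≠ 1}.Finite ∧ charEval χ = Ψ := by
  have hopen : IsOpen {a | Ψ a = 1} :=
    isOpen_addChar_eq_one_of_nsmul_eq_zero Nat.card_pos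
      (fun a => funext fun m => card_nsmul_eq_zero' (x := a m)) hΨ
  obtain ⟨s, u, hu, hsu⟩ := isOpen_pi_iff.1 hopen 0 Ψ.map_zero_eq_one
  refine exists_charEval_eq_of_forall_eq_one (s := s) fun a ha => hsu fun m hm => ?_
  rw [ha m hm]
  exact (hu m hm).2

variable [TopologicalSpace A] [DiscreteTopology A]

theorem continuous_charEval {χ : M → AddChar A ℂ} (hχ : {m | χ m ≠ 1}.Finite) :
    Continuous (charEval χ) := by
  simp only [funext (charEval_eq_prod hχ.coe_toFinset.ge)]
  exact continuous_finsetProd _ fun m _ =>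
    (continuous_of_discreteTopology (f := χ m)).comp (continuous_apply m)

theorem exists_charEval_eq_charEval_comp [Finite A] {T : (M → A) → (M → A)} (hT : Continuous T)
    (hadd : ∀ x y, T (x + y) = T x + T y) {χ : M → AddChar A ℂ} (hχ : {m | χ m ≠ 1}.Finite) :
    ∃ ψ : M → AddChar A ℂ, {m | ψ m ≠ 1}.Finite ∧ ∀ a, charEval ψ a = charEval χ (T a) := by
  let Ψ := (charEvalAddChar χ hχ).compAddMonoidHom (AddMonoidHom.mk' T hadd)
  obtain ⟨ψ, hψ, hψΨ⟩ :=
    exists_charEval_eq_of_continuous (Ψ := Ψ) ((continuous_charEval hχ).comp hT)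
  exact ⟨ψ, hψ, congr_fun hψΨ⟩

theorem exists_continuous_addChar_apply_ne [Finite A] {x y : M → A} (hxy : x ≠ y) :
    ∃ Ψ : AddChar (M → A) ℂ, Continuous Ψ ∧ Ψ x ≠ Ψ y := by
  obtain ⟨m, hm⟩ := Function.ne_iff.1 hxy
  obtain ⟨ψ, hψ⟩ := AddChar.exists_apply_ne_zero.2 (sub_ne_zero.2 hm)
  refine ⟨ψ.compAddMonoidHom (Pi.evalAddMonoidHom (fun _ => A) m),
    (continuous_of_discreteTopology (f := ψ)).comp (continuous_apply m), fun h => hψ ?_⟩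
  have hψm : ψ (x m) = ψ (y m) := h
  rw [AddChar.map_sub_eq_div, hψm, ← AddChar.map_sub_eq_div, sub_self, AddChar.map_zero_eq_one]

end CharEval

section WeakConvergence

variable {X 𝕜 : Type*} [TopologicalSpace X] [CompactSpace X] [MeasurableSpace X]
  [OpensMeasurableSpace X] [RCLike 𝕜]

theorem integrable_continuousMap (ν : Measure X) [IsFiniteMeasure ν] (g : C(X, 𝕜)) :
    Integrable g ν :=
  (BoundedContinuousFunction.mkOfCompact g).integrable ν

theorem norm_integral_continuousMap_le (ν : Measure X) [IsProbabilityMeasure ν] (g : C(X, 𝕜)) :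
    ‖∫ x, g x ∂ν‖ ≤ ‖g‖ :=
  (BoundedContinuousFunction.mkOfCompact g).norm_integral_le_norm ν

theorem lipschitzWith_integral_continuousMap (ν : Measure X) [IsProbabilityMeasure ν] :
    LipschitzWith 1 fun g : C(X, 𝕜) => ∫ x, g x ∂ν := by
  refine LipschitzWith.of_dist_le_mul fun f g => ?_
  rw [NNReal.coe_one, one_mul, dist_eq_norm, dist_eq_norm,
    ← integral_sub (integrable_continuousMap ν f) (integrable_continuousMap ν g)]
  exact norm_integral_continuousMap_le ν (f - g)

theorem tendsto_integral_of_mem_span {ι : Type*} {l : Filter ι} {ν : ι → Measure X}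
    [∀ i, IsFiniteMeasure (ν i)] {lam : Measure X} [IsFiniteMeasure lam] {S : Set C(X, 𝕜)}
    (hS : ∀ f ∈ S, Tendsto (fun i => ∫ x, f x ∂(ν i)) l (𝓝 (∫ x, f x ∂lam))) {g : C(X, 𝕜)}
    (hg : g ∈ Submodule.span 𝕜 S) :
    Tendsto (fun i => ∫ x, g x ∂(ν i)) l (𝓝 (∫ x, g x ∂lam)) := by
  induction hg using Submodule.span_induction with
  | mem f hf => exact hS f hf
  | zero => simpa using tendsto_const_nhds
  | add f₁ f₂ _ _ h₁ h₂ =>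
    have hadd (κ : Measure X) [IsFiniteMeasure κ] :
        ∫ x, (f₁ + f₂) x ∂κ = ∫ x, f₁ x ∂κ + ∫ x, f₂ x ∂κ :=
      integral_add (integrable_continuousMap κ f₁) (integrable_continuousMap κ f₂)
    simpa only [hadd] using h₁.add h₂
  | smul c f _ hf =>
    simpa only [ContinuousMap.smul_apply, integral_smul] using hf.const_smul c

theorem tendsto_integral_of_dense_span {ι : Type*} {l : Filter ι} {ν : ι → Measure X}
    [∀ i, IsProbabilityMeasure (ν i)] {lam : Measure X} [IsProbabilityMeasure lam]
    {S : Set C(X, 𝕜)} (hdense : Dense (Submodule.span 𝕜 S : Set C(X, 𝕜)))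
    (hS : ∀ f ∈ S, Tendsto (fun i => ∫ x, f x ∂(ν i)) l (𝓝 (∫ x, f x ∂lam))) (g : C(X, 𝕜)) :
    Tendsto (fun i => ∫ x, g x ∂(ν i)) l (𝓝 (∫ x, g x ∂lam)) := by
  have hequi : Equicontinuous fun i (f : C(X, 𝕜)) => ∫ x, f x ∂(ν i) :=
    (LipschitzWith.uniformEquicontinuous _ 1 fun i =>
      lipschitzWith_integral_continuousMap (ν i)).equicontinuous
  have hclosed :=
    hequi.isClosed_setOfPred_tendsto (l := l) (lipschitzWith_integral_continuousMap lam).continuous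
  exact closure_minimal (fun f hf => tendsto_integral_of_mem_span hS hf) hclosed (hdense g)

end WeakConvergence

section Uniform

/-- The measure of a cylinder of `A^M` with `k` prescribed coordinates is `|A|⁻ᵏ`. This pins down
the Haar probability measure of `A^M` through its values on cylinders, without presupposing that
these are measurable. -/
def UniformOnCylinders {A M : Type*} [Fintype A] [MeasurableSpace A] (lam : Measure (M → A)) :
    Prop :=
  ∀ (s : Finset M) (f : M → A),
    lam {a | ∀ m ∈ s, a m = f m} = (1 / (Fintype.card A : ENNReal)) ^ s.card

namespace UniformOnCylinders

variable {A M : Type*} [Fintype A] [MeasurableSpace A] {lam : Measure (M → A)}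
  [IsProbabilityMeasure lam]

/- If `c ≠ d` were inseparable by measurable sets, a measurable hull of `{a | a m = c}` would also
cover `{a | a m = d}`, so `|A| - 1` sets of measure `1 / |A|` would cover the whole space. -/
theorem measurableSingletonClass [Nonempty M] (hlam : UniformOnCylinders lam) :
    MeasurableSingletonClass A := by
  classical
  suffices MeasurableSpace.SeparatesPoints A from inferInstance
  refine ⟨fun c d hcd => by_contra fun hne => ?_⟩
  obtain ⟨m⟩ := ‹Nonempty M›
  let hull (x : A) : Set (M → A) := toMeasurable lam {a | a m = x}
  have hhull (a : M → A) : a ∈ hull (a m) := subset_toMeasurable _ _ rfl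
  have hinsep (a : M → A) (ha : a m = d) : a ∈ hull c := by
    have hc : Function.update a m c ∈ hull c := by simpa using hhull (Function.update a m c)
    simpa [← ha] using hcd _ (measurable_update a (measurableSet_toMeasurable lam _)) hc
  have hcover : Set.univ ⊆ ⋃ x ∈ Finset.univ.erase d, hull x := by
    intro a _
    simp only [Set.mem_iUnion, Finset.mem_erase, Finset.mem_univ, and_true, exists_prop]
    by_cases ha : a m = d
    · exact ⟨c, hne, hinsep a ha⟩
    · exact ⟨a m, ha, hhull a⟩
  have hmass (x : A) : lam (hull x) = 1 / (Fintype.card A : ENNReal) := by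
    simpa [hull] using hlam {m} fun _ => x
  have hle : (1 : ENNReal) ≤ (Fintype.card A - 1 : ℕ) * (1 / (Fintype.card A : ENNReal)) :=
    calc (1 : ENNReal) = lam Set.univ := measure_univ.symm
      _ ≤ ∑ x ∈ Finset.univ.erase d, lam (hull x) :=
        (measure_mono hcover).trans (measure_biUnion_finset_le _ _)
      _ = _ := by simp [hmass]
  have hpos : 0 < Fintype.card A := Fintype.card_pos_iff.2 ⟨d⟩
  rw [mul_one_div, ENNReal.le_div_iff_mul_le (by simp [hpos.ne']) (by simp), one_mul,
    Nat.cast_le] at hle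
  omega

theorem borelSpace [TopologicalSpace A] [DiscreteTopology A] [Countable M]
    (hlam : UniformOnCylinders lam) : BorelSpace (M → A) := by
  cases isEmpty_or_nonempty M
  · exact ⟨MeasurableSpace.ext fun _ => iff_of_true Subsingleton.measurableSet
      (@Subsingleton.measurableSet _ (borel _) _ _)⟩
  · have := hlam.measurableSingletonClass
    infer_instance

theorem map_restrict_real_singleton [MeasurableSingletonClass A] (hlam : UniformOnCylinders lam)
    (s : Finset M) (f : s → A) :
    (lam.map s.restrict).real {f} = ((Fintype.card A : ℝ) ^ s.card)⁻¹ := by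
  have hA (m : M) : Nonempty A := (nonempty_of_isProbabilityMeasure lam).map (· m)
  obtain ⟨g, rfl⟩ : ∃ g : M → A, s.restrict g = f :=
    Subtype.surjective_restrict (ne := hA) (· ∈ s) f
  have hpre : (s.restrict : (M → A) → (s → A)) ⁻¹' {s.restrict g} =
      {a | ∀ m ∈ s, a m = g m} := by
    ext a
    simp [funext_iff]
  rw [map_measureReal_apply (Finset.measurable_restrict s) (measurableSet_singleton _), hpre,
    measureReal_def, hlam]
  simp

theorem integral_restrict [DecidableEq M] [MeasurableSingletonClass A]
    (hlam : UniformOnCylinders lam) {E : Type*} [NormedAddCommGroup E] [NormedSpace ℝ E]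
    [CompleteSpace E] (s : Finset M) (G : (s → A) → E) :
    ∫ a, G (s.restrict a) ∂lam = ((Fintype.card A : ℝ) ^ s.card)⁻¹ • ∑ f, G f := by
  have hr : Measurable (s.restrict : (M → A) → (s → A)) := Finset.measurable_restrict s
  rw [← integral_map hr.aemeasurable AEStronglyMeasurable.of_discrete,
    integral_fintype Integrable.of_finite]
  simp only [hlam.map_restrict_real_singleton, Finset.smul_sum]

theorem integral_finset_prod_apply [MeasurableSingletonClass A] (hlam : UniformOnCylinders lam)
    {𝕜 : Type*} [RCLike 𝕜] (s : Finset M) (h : M → A → 𝕜) :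
    ∫ a, ∏ m ∈ s, h m (a m) ∂lam =
      ((Fintype.card A : ℝ) ^ s.card)⁻¹ • ∏ m ∈ s, ∑ x, h m x := by
  classical
  calc ∫ a, ∏ m ∈ s, h m (a m) ∂lam
      = ∫ a, ∏ m : s, h m (s.restrict a m) ∂lam := by
        congr with a
        exact (Finset.prod_coe_sort s fun m => h m (a m)).symm
    _ = ((Fintype.card A : ℝ) ^ s.card)⁻¹ • ∑ f : s → A, ∏ m : s, h m (f m) :=
        hlam.integral_restrict s fun f => ∏ m : s, h m (f m)
    _ = ((Fintype.card A : ℝ) ^ s.card)⁻¹ • ∏ m ∈ s, ∑ x, h m x := by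
        rw [← Fintype.prod_sum fun (m : s) x => h m x, Finset.prod_coe_sort s fun m => ∑ x, h m x]

theorem integral_charEval_eq_zero [AddCommGroup A] (hlam : UniformOnCylinders lam)
    {χ : M → AddChar A ℂ} (hχ : {m | χ m ≠ 1}.Finite) {m₀ : M} (hm₀ : χ m₀ ≠ 1) :
    ∫ a, charEval χ a ∂lam = 0 := by
  have : Nonempty M := ⟨m₀⟩
  have := hlam.measurableSingletonClass
  have hprod : ∏ m ∈ hχ.toFinset, ∑ x, χ m x = 0 :=
    Finset.prod_eq_zero (hχ.mem_toFinset.2 hm₀) (AddChar.sum_eq_zero_of_ne_one hm₀)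
  simp only [charEval_eq_prod hχ.coe_toFinset.ge]
  rw [hlam.integral_finset_prod_apply hχ.toFinset fun m x => χ m x, hprod, smul_zero]

end UniformOnCylinders

end Uniform

section Diffusion

/-- A sequence of self-maps of `A^M` is diffusive in density if, for every nontrivial character `χ`,
the rank of the character `χ ∘ T n` tends to infinity along a set of density one. A linear cellular
automaton `F` is diffusive in density when `T n = F^[n]` is. -/
def DiffusiveInDensity {A M : Type*} [AddCommGroup A] (T : ℕ → (M → A) → (M → A)) : Prop :=
  ∀ χ : M → AddChar A ℂ, {m | χ m ≠ 1}.Finite → (∃ m, χ m ≠ 1) →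
    ∃ J : Set ℕ, HasDensityOne J ∧
      ∀ ψ : ℕ → M → AddChar A ℂ, (∀ n, {m | ψ n m ≠ 1}.Finite) →
        (∀ n a, charEval (ψ n) a = charEval χ (T n a)) →
        Tendsto (fun n => {m | ψ n m ≠ 1}.ncard) (atTop ⊓ 𝓟 J) atTop

variable {A M : Type*} [AddCommGroup A] [MeasurableSpace A] {μ : Measure (M → A)}

theorem HarmonicallyMixing.tendsto_integral_charEval (hμ : HarmonicallyMixing μ) {ι : Type*}
    {l : Filter ι} {ψ : ι → M → AddChar A ℂ} (hψ : ∀ i, {m | ψ i m ≠ 1}.Finite)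
    (hrank : Tendsto (fun i => {m | ψ i m ≠ 1}.ncard) l atTop) :
    Tendsto (fun i => ∫ a, charEval (ψ i) a ∂μ) l (𝓝 0) := by
  rw [Metric.tendsto_nhds]
  intro ε hε
  obtain ⟨R, hR⟩ := hμ ε hε
  filter_upwards [hrank.eventually_gt_atTop R] with i hi
  simpa using hR (ψ i) (hψ i) hi

variable [TopologicalSpace A] [DiscreteTopology A] {T : ℕ → (M → A) → (M → A)}

theorem DiffusiveInDensity.exists_tendsto_integral_charEval_zero [Finite A] [BorelSpace (M → A)]
    (hdiff : DiffusiveInDensity T) (hT : ∀ n, Continuous (T n))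
    (hT_add : ∀ n x y, T n (x + y) = T n x + T n y) (hμ : HarmonicallyMixing μ)
    {χ : M → AddChar A ℂ} (hχ : {m | χ m ≠ 1}.Finite) (hne : ∃ m, χ m ≠ 1) :
    ∃ J : Set ℕ, HasDensityOne J ∧
      Tendsto (fun n => ∫ a, charEval χ a ∂(μ.map (T n))) (atTop ⊓ 𝓟 J) (𝓝 0) := by
  obtain ⟨J, hJ, hrank⟩ := hdiff χ hχ hne
  choose ψ hψ hψT using fun n => exists_charEval_eq_charEval_comp (hT n) (hT_add n) hχ
  have hmap (n : ℕ) : ∫ a, charEval χ a ∂(μ.map (T n)) = ∫ a, charEval (ψ n) a ∂μ := by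
    simp only [hψT]
    exact integral_map (hT n).aemeasurable (continuous_charEval hχ).aestronglyMeasurable
  simp only [hmap]
  exact ⟨J, hJ, hμ.tendsto_integral_charEval hψ (hrank ψ hψ hψT)⟩

variable [Fintype A] [IsProbabilityMeasure μ] {lam : Measure (M → A)} [IsProbabilityMeasure lam]

theorem DiffusiveInDensity.exists_tendsto_integral_charEval [BorelSpace (M → A)]
    (hdiff : DiffusiveInDensity T) (hT : ∀ n, Continuous (T n))
    (hT_add : ∀ n x y, T n (x + y) = T n x + T n y) (hμ : HarmonicallyMixing μ)
    (hlam : UniformOnCylinders lam) {χ : M → AddChar A ℂ} (hχ : {m | χ m ≠ 1}.Finite) :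
    ∃ J : Set ℕ, HasDensityOne J ∧
      Tendsto (fun n => ∫ a, charEval χ a ∂(μ.map (T n))) (atTop ⊓ 𝓟 J)
        (𝓝 (∫ a, charEval χ a ∂lam)) := by
  by_cases hne : ∃ m, χ m ≠ 1
  · have ⟨m, hm⟩ := hne
    rw [hlam.integral_charEval_eq_zero hχ hm]
    exact hdiff.exists_tendsto_integral_charEval_zero hT hT_add hμ hχ hne
  · have (n : ℕ) : IsProbabilityMeasure (μ.map (T n)) :=
      Measure.isProbabilityMeasure_map (hT n).aemeasurable
    push Not at hne
    exact ⟨Set.univ, hasDensityOne_univ, by simp [charEval, hne]⟩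

theorem diffusive_in_density_pushes_to_haar_general [Countable M] (hT : ∀ n, Continuous (T n))
    (hT_add : ∀ n x y, T n (x + y) = T n x + T n y) (hμ : HarmonicallyMixing μ)
    (hdiff : DiffusiveInDensity T) (hlam : UniformOnCylinders lam) :
    (∃ J : Set ℕ, HasDensityOne J ∧
      ∀ g : (M → A) → ℂ, Continuous g →
        Tendsto (fun n => ∫ a, g a ∂(μ.map (T n))) (atTop ⊓ 𝓟 J) (𝓝 (∫ a, g a ∂lam))) ∧
    (∀ g : (M → A) → ℂ, Continuous g →
      Tendsto (fun N : ℕ => (N : ℝ)⁻¹ • ∑ n ∈ Finset.Icc 1 N, ∫ a, g a ∂(μ.map (T n)))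
        atTop (𝓝 (∫ a, g a ∂lam))) := by
  have : BorelSpace (M → A) := hlam.borelSpace
  have (n : ℕ) : IsProbabilityMeasure (μ.map (T n)) :=
    Measure.isProbabilityMeasure_map (hT n).aemeasurable
  have : Countable {χ : M → AddChar A ℂ // {m | χ m ≠ 1}.Finite} :=
    countable_setOf_finite_ne_one.to_subtype
  obtain ⟨J, hJ, hcharEval⟩ := exists_hasDensityOne_forall_tendsto
    fun χ : {χ : M → AddChar A ℂ // {m | χ m ≠ 1}.Finite} =>
      hdiff.exists_tendsto_integral_charEval hT hT_add hμ hlam χ.2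
  have hconv : ∀ g : C(M → A, ℂ),
      Tendsto (fun n => ∫ a, g a ∂(μ.map (T n))) (atTop ⊓ 𝓟 J) (𝓝 (∫ a, g a ∂lam)) := by
    refine tendsto_integral_of_dense_span
      (dense_span_continuousCharacters fun _ _ => exists_continuous_addChar_apply_ne) ?_
    rintro f ⟨Ψ, hΨ⟩
    obtain ⟨χ, hχ, hχΨ⟩ := exists_charEval_eq_of_continuous (hΨ ▸ f.continuous : Continuous Ψ)
    simpa only [← hΨ, ← hχΨ] using hcharEval ⟨χ, hχ⟩
  exact ⟨⟨J, hJ, fun g hg => hconv ⟨g, hg⟩⟩, fun g hg => hJ.tendsto_cesaro_smul_Icc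
    (fun n => norm_integral_continuousMap_le (μ.map (T n)) ⟨g, hg⟩) (hconv ⟨g, hg⟩)⟩

end Diffusion

/-- A linear cellular automaton that is diffusive in density pushes any
harmonically mixing probability measure to Haar measure weak*, along a subset
`J ⊆ ℕ` of Cesàro density 1; consequently the Cesàro averages of `F^n μ`
converge weak* to Haar measure. -/
theorem diffusive_in_density_pushes_to_haar (A : Type*) [AddCommGroup A] [Fintype A]
    [MeasurableSpace A] [TopologicalSpace A] [DiscreteTopology A]
    (M : Type*) [Monoid M] [Countable M]
    (F : (M → A) → (M → A)) (hF_cont : Continuous F)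
    (hF_add : ∀ x y, F (x + y) = F x + F y)
    (hF_shift : ∀ (e : M) (x : M → A), F (fun m => x (e * m)) = fun m => F x (e * m))
    (μ : Measure (M → A)) [IsProbabilityMeasure μ] (hμ : HarmonicallyMixing μ)
    (hdiff : ∀ χ : M → AddChar A ℂ, {m | χ m ≠ 1}.Finite → (∃ m, χ m ≠ 1) →
      ∃ Jχ : Set ℕ, HasDensityOne Jχ ∧
        ∀ ψ : ℕ → M → AddChar A ℂ, (∀ n, {m | ψ n m ≠ 1}.Finite) →
        (∀ (n : ℕ) (a : M → A), charEval (ψ n) a = charEval χ (F^[n] a)) →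
        Tendsto (fun n => ({m | ψ n m ≠ 1}).ncard) (atTop ⊓ Filter.principal Jχ) atTop)
    (lam : Measure (M → A)) [IsProbabilityMeasure lam]
    (hlam : ∀ (s : Finset M) (f : M → A),
      lam {a | ∀ m ∈ s, a m = f m} = (1 / (Fintype.card A : ENNReal)) ^ s.card) :
    (∃ J : Set ℕ, HasDensityOne J ∧
      ∀ g : (M → A) → ℂ, Continuous g →
        Tendsto (fun n => ∫ a, g a ∂(μ.map F^[n])) (atTop ⊓ Filter.principal J)
          (nhds (∫ a, g a ∂lam))) ∧
    (∀ g : (M → A) → ℂ, Continuous g →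
      Tendsto (fun N : ℕ => (N : ℝ)⁻¹ • ∑ n ∈ Finset.Icc 1 N, ∫ a, g a ∂(μ.map F^[n]))
        atTop (nhds (∫ a, g a ∂lam))) := by
  have hiterate_add (n : ℕ) (x y : M → A) : F^[n] (x + y) = F^[n] x + F^[n] y :=
    iterate_map_add (AddMonoidHom.mk' F hF_add) n x y
  exact diffusive_in_density_pushes_to_haar_general (T := fun n => F^[n]) hF_cont.iterate
    hiterate_add hμ hdiff hlam
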